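/- Let A be a separable unital C*-algebra such that the extreme boundary ∂ₑT(A) of its trace space is compact, let G be a countable discrete group, and let α be an action of G on A. Suppose that the orbits of the induced action α* on ∂ₑT(A) are finite with uniformly bounded cardinality and that the orbit space ∂ₑT(A)/G, with the quotient topology, is Hausdorff. Then the averaging map ∂ₑT(A) → T(A) sending τ to τ^α = |G·τ|^{-1} ∑_{σ ∈ G·τ} σ is continuous (with respect to the weak* topologies). -/

import Mathlib

open scoped ComplexOrder

/-- A tracial state on a unital C*-algebra `A`, as an element of the weak-* dual. -/
def IsTracialState {A : Type*} [NormedRing A] [StarRing A] [NormedAlgebra ℂ A]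
    (τ : WeakDual ℂ A) : Prop :=
  τ 1 = 1 ∧ (∀ a : A, 0 ≤ τ (star a * a)) ∧ ∀ a b : A, τ (a * b) = τ (b * a)

/-- The orbit `{τ ∘ α_g : g ∈ G}` of a functional `τ` under an action `α` of `G` on `A`. -/
def traceOrbit {A : Type*} [NormedRing A] [StarRing A] [NormedAlgebra ℂ A]
    {G : Type*} (α : G → A ≃⋆ₐ[ℂ] A) (τ : WeakDual ℂ A) : Set (WeakDual ℂ A) :=
  {σ | ∃ g : G, ∀ a : A, σ a = τ (α g a)}

/-!
Fix `τ₀` and pick finitely many group elements realising each permutation that `G` induces on the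
finite orbit of `τ₀` exactly once. Averaging a continuous `f` over translates by these elements
gives a continuous `h` with the same orbit averages as `f` that is constant on the orbit of `τ₀`.
Since the quotient map from a compact space to a Hausdorff orbit space is closed, every
neighbourhood of the orbit of `τ₀` contains all orbits passing near `τ₀`. On these, `h` takes values
in a given convex neighbourhood of `h τ₀`, and hence so do its orbit averages.
-/

open MulAction Topology

section OrbitAverage

variable {G X V : Type*} [Group G] [MulAction G X] [AddCommGroup V] [Module ℝ V]

variable (G) in
/-- The average of `f` over the orbit of `x`; it is meant for finite orbits and has the junk value
`0` on infinite ones. -/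
noncomputable def orbitAverage (f : X → V) (x : X) : V :=
  ((orbit G x).ncard : ℝ)⁻¹ • ∑ᶠ y ∈ orbit G x, f y

theorem orbitAverage_comp_smul (g : G) (f : X → V) (x : X) :
    orbitAverage G (fun y => f (g • y)) x = orbitAverage G f x := by
  have hbij : Set.BijOn (g • ·) (orbit G x) (orbit G x) :=
    ⟨fun _ hy => mem_orbit_of_mem_orbit g hy, (MulAction.injective g).injOn,
      fun y hy => ⟨g⁻¹ • y, mem_orbit_of_mem_orbit g⁻¹ hy, smul_inv_smul g y⟩⟩
  exact congrArg _ (finsum_mem_eq_of_bijOn (g • ·) hbij fun _ _ => rfl)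

theorem orbitAverage_eq_sum {x : X} (hx : (orbit G x).Finite) (f : X → V) :
    orbitAverage G f x = ∑ y ∈ hx.toFinset, (hx.toFinset.card : ℝ)⁻¹ • f y := by
  rw [orbitAverage, finsum_mem_eq_finite_toFinset_sum _ hx, Set.ncard_eq_toFinset_card _ hx,
    Finset.smul_sum]

theorem orbitAverage_mem_of_convex {C : Set V} (hC : Convex ℝ C) {x : X} (hx : (orbit G x).Finite)
    {f : X → V} (hf : ∀ y ∈ orbit G x, f y ∈ C) : orbitAverage G f x ∈ C := by
  have hcard : (hx.toFinset.card : ℝ) ≠ 0 :=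
    Nat.cast_ne_zero.2 (Finset.card_ne_zero.2 ⟨x, hx.mem_toFinset.2 (mem_orbit_self x)⟩)
  rw [orbitAverage_eq_sum hx]
  exact hC.sum_mem (fun _ _ => by positivity) (by simp [hcard])
    fun y hy => hf y (hx.mem_toFinset.1 hy)

theorem orbitAverage_average_translates {S : Finset G} (hS : S.Nonempty) {x : X}
    (hx : (orbit G x).Finite) (f : X → V) :
    orbitAverage G (fun y => (S.card : ℝ)⁻¹ • ∑ g ∈ S, f (g • y)) x = orbitAverage G f x := by
  have hcard : (S.card : ℝ) ≠ 0 := Nat.cast_ne_zero.2 hS.card_ne_zero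
  calc orbitAverage G (fun y => (S.card : ℝ)⁻¹ • ∑ g ∈ S, f (g • y)) x
      = (S.card : ℝ)⁻¹ • ∑ g ∈ S, orbitAverage G (fun y => f (g • y)) x := by
        simp only [orbitAverage_eq_sum hx, Finset.smul_sum]
        rw [Finset.sum_comm]
        simp only [smul_comm (S.card : ℝ)⁻¹]
    _ = orbitAverage G f x := by
        simp only [orbitAverage_comp_smul, Finset.sum_const, ← Nat.cast_smul_eq_nsmul ℝ,
          inv_smul_smul₀ hcard]

end OrbitAverage

theorem exists_finset_sum_smul_eq_on_orbit {G X : Type*} [Group G] [MulAction G X] {x : X}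
    (hx : (orbit G x).Finite) :
    ∃ S : Finset G, S.Nonempty ∧ ∀ {V : Type*} [AddCommMonoid V] (f : X → V),
      ∀ y ∈ orbit G x, ∑ g ∈ S, f (g • y) = ∑ g ∈ S, f (g • x) := by
  have : Finite (orbit G x) := hx.to_subtype
  let p := (toPermHom G (orbit G x)).rangeRestrict
  have : Fintype (toPermHom G (orbit G x)).range := Fintype.ofFinite _
  have hp : Function.Surjective p := MonoidHom.rangeRestrict_surjective _
  let s := Function.surjInv hp
  have hs (q) (z : orbit G x) : s q • (z : X) = (q • z : orbit G x) :=
    congrArg (fun q => ((q • z : orbit G x) : X)) (Function.surjInv_eq hp q)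
  refine ⟨Finset.univ.map ⟨s, Function.injective_surjInv hp⟩, by simp, ?_⟩
  rintro V _ f _ ⟨g, rfl⟩
  let x₀ : orbit G x := ⟨x, mem_orbit_self x⟩
  simp only [Finset.sum_map, Function.Embedding.coeFn_mk]
  calc ∑ q, f (s q • g • x)
      = ∑ q, f ((q * p g) • x₀ : orbit G x) :=
        Finset.sum_congr rfl fun q _ => congrArg f (hs q (g • x₀))
    _ = ∑ q, f (q • x₀ : orbit G x) :=
        Equiv.sum_comp (Equiv.mulRight (p g)) fun q => f (q • x₀ : orbit G x)
    _ = ∑ q, f (s q • x) := Finset.sum_congr rfl fun q _ => congrArg f (hs q x₀).symm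

section Continuity

variable {G X V : Type*} [Group G] [MulAction G X] [TopologicalSpace X]
  [AddCommGroup V] [Module ℝ V] [TopologicalSpace V] [LocallyConvexSpace ℝ V]

theorem continuousAt_orbitAverage_of_eq_on_orbit
    (hclosed : IsClosedMap (Quotient.mk (orbitRel G X))) (hfin : ∀ x : X, (orbit G x).Finite)
    {h : X → V} (hh : Continuous h) {x : X} (hconst : ∀ y ∈ orbit G x, h y = h x) :
    ContinuousAt (orbitAverage G h) x := by
  have hx : orbitAverage G h x = h x :=
    orbitAverage_mem_of_convex (convex_singleton (h x)) (hfin x) hconst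
  rw [ContinuousAt, hx, (LocallyConvexSpace.convex_basis (𝕜 := ℝ) (h x)).tendsto_right_iff]
  rintro U ⟨hU, hUconvex⟩
  have hfiber : ∀ᶠ q in 𝓝 (Quotient.mk (orbitRel G X) x),
      ∀ y ∈ Quotient.mk (orbitRel G X) ⁻¹' {q}, h y ∈ U :=
    hclosed.eventually_nhds_fiber _ fun y hy =>
      hh.continuousAt.eventually_mem (by rwa [hconst y (Quotient.exact hy)])
  filter_upwards [continuous_quotient_mk'.continuousAt.eventually hfiber] with z hz
  exact orbitAverage_mem_of_convex hUconvex (hfin z) fun y hy => hz y (Quotient.sound hy)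

theorem continuous_orbitAverage [ContinuousConstSMul G X] [ContinuousAdd V]
    [ContinuousConstSMul ℝ V] (hclosed : IsClosedMap (Quotient.mk (orbitRel G X)))
    (hfin : ∀ x : X, (orbit G x).Finite) {f : X → V} (hf : Continuous f) :
    Continuous (orbitAverage G f) := by
  refine continuous_iff_continuousAt.2 fun x => ?_
  obtain ⟨S, hS, hsum⟩ := exists_finset_sum_smul_eq_on_orbit (hfin x)
  let h : X → V := fun y => (S.card : ℝ)⁻¹ • ∑ g ∈ S, f (g • y)
  have hh : Continuous h := by fun_prop
  have hconst : ∀ y ∈ orbit G x, h y = h x := fun y hy =>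
    congrArg ((S.card : ℝ)⁻¹ • ·) (hsum f y hy)
  have havg : orbitAverage G h = orbitAverage G f :=
    funext fun z => orbitAverage_average_translates hS (hfin z) f
  exact havg ▸ continuousAt_orbitAverage_of_eq_on_orbit hclosed hfin hh hconst

end Continuity

section Traces

variable {A : Type*} [CStarAlgebra A]

/-- The transpose `τ ↦ τ ∘ φ` of a `*`-automorphism, as an automorphism of the real topological
vector space `WeakDual ℂ A`. -/
noncomputable def weakDualPullback (φ : A ≃⋆ₐ[ℂ] A) : WeakDual ℂ A ≃L[ℝ] WeakDual ℂ A where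
  toFun τ := StrongDual.toWeakDual ((WeakDual.toStrongDual τ).comp
    ⟨φ.toAlgEquiv.toLinearMap, (StarAlgEquiv.isometry φ).continuous⟩)
  invFun τ := StrongDual.toWeakDual ((WeakDual.toStrongDual τ).comp
    ⟨φ.symm.toAlgEquiv.toLinearMap, (StarAlgEquiv.isometry φ.symm).continuous⟩)
  map_add' _ _ := rfl
  map_smul' _ _ := rfl
  left_inv τ := DFunLike.ext _ _ fun a => congrArg τ (φ.apply_symm_apply a)
  right_inv τ := DFunLike.ext _ _ fun a => congrArg τ (φ.symm_apply_apply a)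
  continuous_toFun := WeakDual.continuous_of_continuous_eval fun a => WeakDual.eval_continuous (φ a)
  continuous_invFun :=
    WeakDual.continuous_of_continuous_eval fun a => WeakDual.eval_continuous (φ.symm a)

@[simp]
theorem weakDualPullback_apply (φ : A ≃⋆ₐ[ℂ] A) (τ : WeakDual ℂ A) (a : A) :
    weakDualPullback φ τ a = τ (φ a) := rfl

theorem IsTracialState.weakDualPullback {τ : WeakDual ℂ A} (hτ : IsTracialState τ)
    (φ : A ≃⋆ₐ[ℂ] A) : IsTracialState (weakDualPullback φ τ) := by
  obtain ⟨hone, hpos, hcomm⟩ := hτ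
  refine ⟨?_, fun a => ?_, fun a b => ?_⟩
  · simpa using hone
  · simpa [map_star] using hpos (φ a)
  · simpa using hcomm (φ a) (φ b)

theorem weakDualPullback_image_tracialStates (φ : A ≃⋆ₐ[ℂ] A) :
    weakDualPullback φ '' {τ : WeakDual ℂ A | IsTracialState τ} = {τ | IsTracialState τ} := by
  refine Set.Subset.antisymm (Set.image_subset_iff.2 fun τ hτ => hτ.weakDualPullback φ) ?_
  exact fun τ hτ => ⟨weakDualPullback φ.symm τ, hτ.weakDualPullback φ.symm,
    (weakDualPullback φ).apply_symm_apply τ⟩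

variable (A) in
/-- The extreme boundary `∂ₑT(A)` of the trace space. -/
abbrev extremeTraces : Set (WeakDual ℂ A) :=
  {τ : WeakDual ℂ A | IsTracialState τ}.extremePoints ℝ

theorem weakDualPullback_mem_extremeTraces (φ : A ≃⋆ₐ[ℂ] A) {τ : WeakDual ℂ A}
    (hτ : τ ∈ extremeTraces A) : weakDualPullback φ τ ∈ extremeTraces A := by
  have himage := image_extremePoints (𝕜 := ℝ) (weakDualPullback φ) {τ | IsTracialState τ}
  rw [weakDualPullback_image_tracialStates] at himage
  exact himage.subset <| Set.mem_image_of_mem _ hτ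

/-- The action of `Aut(A)` on `∂ₑT(A)`, with `φ • τ = τ ∘ φ⁻¹` so that it is a left action. -/
noncomputable instance extremeTraces.instMulAction : MulAction (A ≃⋆ₐ[ℂ] A) (extremeTraces A) where
  smul φ τ := ⟨weakDualPullback φ⁻¹ τ, weakDualPullback_mem_extremeTraces φ⁻¹ τ.2⟩
  one_smul _ := rfl
  mul_smul _ _ _ := rfl

instance extremeTraces.instContinuousConstSMul :
    ContinuousConstSMul (A ≃⋆ₐ[ℂ] A) (extremeTraces A) where
  continuous_const_smul φ :=
    ((weakDualPullback φ⁻¹).continuous.comp continuous_subtype_val).subtype_mk _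

variable {G : Type*} [Group G] (α : G →* (A ≃⋆ₐ[ℂ] A))

theorem traceOrbit_eq_image_orbit (τ : extremeTraces A) :
    traceOrbit α (τ : WeakDual ℂ A) = Subtype.val '' orbit α.range τ := by
  ext σ
  constructor
  · rintro ⟨g, hg⟩
    refine ⟨(α g)⁻¹ • τ, ⟨⟨(α g)⁻¹, g⁻¹, map_inv α g⟩, rfl⟩, ?_⟩
    exact DFunLike.ext _ _ fun a => (hg a).symm
  · rintro ⟨_, ⟨⟨_, g, rfl⟩, rfl⟩, rfl⟩
    exact ⟨g⁻¹, fun a => by rw [map_inv]; rfl⟩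

theorem mem_traceOrbit_iff_orbitRel (σ τ : extremeTraces A) :
    (τ : WeakDual ℂ A) ∈ traceOrbit α (σ : WeakDual ℂ A) ↔ orbitRel α.range _ σ τ := by
  rw [traceOrbit_eq_image_orbit, Subtype.val_injective.mem_set_image, orbitRel_apply,
    mem_orbit_symm]

theorem traceOrbit_average_eq_orbitAverage (τ : extremeTraces A) :
    ((traceOrbit α (τ : WeakDual ℂ A)).ncard : ℝ)⁻¹ •
        ∑ᶠ σ ∈ traceOrbit α (τ : WeakDual ℂ A), σ =
      orbitAverage α.range (Subtype.val : extremeTraces A → WeakDual ℂ A) τ := by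
  rw [traceOrbit_eq_image_orbit, Set.ncard_image_of_injective _ Subtype.val_injective,
    finsum_mem_image Subtype.val_injective.injOn, orbitAverage]

theorem stmt1_general (hcpt : IsCompact (extremeTraces A))
    (hfin : ∀ τ ∈ extremeTraces A, (traceOrbit α τ).Finite)
    (hT2 : T2Space (Quot fun σ τ : extremeTraces A =>
      (τ : WeakDual ℂ A) ∈ traceOrbit α (σ : WeakDual ℂ A))) :
    Continuous fun τ : extremeTraces A =>
      (((traceOrbit α (τ : WeakDual ℂ A)).ncard : ℝ)⁻¹ •
        ∑ᶠ σ ∈ traceOrbit α (τ : WeakDual ℂ A), σ : WeakDual ℂ A) := by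
  have : CompactSpace (extremeTraces A) := isCompact_iff_compactSpace.1 hcpt
  have hrel : (fun σ τ : extremeTraces A => (τ : WeakDual ℂ A) ∈ traceOrbit α (σ : WeakDual ℂ A)) =
      orbitRel α.range (extremeTraces A) :=
    funext₂ fun σ τ => propext (mem_traceOrbit_iff_orbitRel α σ τ)
  have : T2Space (orbitRel.Quotient α.range (extremeTraces A)) := by rwa [hrel] at hT2
  have hclosed : IsClosedMap (Quotient.mk (orbitRel α.range (extremeTraces A))) :=
    continuous_quotient_mk'.isClosedMap
  have horbit (τ : extremeTraces A) : (orbit α.range τ).Finite :=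
    (traceOrbit_eq_image_orbit α τ ▸ hfin τ τ.2).of_finite_image Subtype.val_injective.injOn
  simp only [traceOrbit_average_eq_orbitAverage]
  have : ContinuousConstSMul α.range (extremeTraces A) :=
    ⟨fun φ => continuous_const_smul (φ : A ≃⋆ₐ[ℂ] A)⟩
  have : LocallyConvexSpace ℝ (WeakDual ℂ A) :=
    inferInstanceAs (LocallyConvexSpace ℝ (WeakBilin (topDualPairing ℂ A)))
  exact continuous_orbitAverage hclosed horbit continuous_subtype_val

end Traces

/-- Let `A` be a separable unital C*-algebra whose trace space has
compact extreme boundary `∂ₑT(A)`, let `α` be an action of a countable discrete group `G`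
on `A` whose induced action on `∂ₑT(A)` has finite orbits of uniformly bounded cardinality
and Hausdorff orbit space.  Then the averaging map
`τ ↦ |G·τ|⁻¹ ∑_{σ ∈ G·τ} σ : ∂ₑT(A) → T(A)` is weak-* continuous. -/
theorem stmt1 {A : Type*} [NormedRing A] [StarRing A] [CStarRing A]
    [NormedAlgebra ℂ A] [CompleteSpace A] [StarModule ℂ A]
    [TopologicalSpace.SeparableSpace A]
    {G : Type*} [Group G] [Countable G]
    (α : G → A ≃⋆ₐ[ℂ] A)
    (hα1 : ∀ a : A, α 1 a = a)
    (hαmul : ∀ (g h : G) (a : A), α (g * h) a = α g (α h a))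
    (hcpt : IsCompact ({τ : WeakDual ℂ A | IsTracialState τ}.extremePoints ℝ))
    (M : ℕ)
    (horb : ∀ τ ∈ {τ : WeakDual ℂ A | IsTracialState τ}.extremePoints ℝ,
      (traceOrbit α τ).Finite ∧ (traceOrbit α τ).ncard ≤ M)
    (hT2 : T2Space (Quot fun
        σ τ : ({τ : WeakDual ℂ A | IsTracialState τ}.extremePoints ℝ) =>
        (τ : WeakDual ℂ A) ∈ traceOrbit α (σ : WeakDual ℂ A))) :
    Continuous fun τ : ({τ : WeakDual ℂ A | IsTracialState τ}.extremePoints ℝ) =>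
      (((traceOrbit α (τ : WeakDual ℂ A)).ncard : ℝ)⁻¹ •
        ∑ᶠ σ ∈ traceOrbit α (τ : WeakDual ℂ A), σ : WeakDual ℂ A) := by
  let _ : CStarAlgebra A := {}
  let action : G →* (A ≃⋆ₐ[ℂ] A) :=
    { toFun := α
      map_one' := StarAlgEquiv.ext hα1
      map_mul' := fun g h => StarAlgEquiv.ext (hαmul g h) }
  exact stmt1_general action hcpt (fun τ hτ => (horb τ hτ).1) hT2
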